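/- Let d ≥ 1 and let μ, ν be Borel probability measures on ℝ^d with finite second moments. If μ and ν are in convex order (μ ≼_c ν), then W₂(μ,ν)² ≤ ∫|y|² dν(y) − ∫|x|² dμ(x). -/

import Mathlib

open MeasureTheory Metric

noncomputable section

/-- The set of couplings of two measures on `ℝ^d`. -/
def Couplings {d : ℕ} (α β : Measure (EuclideanSpace ℝ (Fin d))) :
    Set (Measure (EuclideanSpace ℝ (Fin d) × EuclideanSpace ℝ (Fin d))) :=
  {π | π.map Prod.fst = α ∧ π.map Prod.snd = β}

/-- The squared 2-Wasserstein distance `W₂(α,β)² = inf_{π ∈ Π(α,β)} ∫ |x-y|² dπ`. -/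
def W2sq {d : ℕ} (α β : Measure (EuclideanSpace ℝ (Fin d))) : ℝ :=
  sInf {r : ℝ | ∃ π ∈ Couplings α β, r = ∫ p, ‖p.1 - p.2‖ ^ 2 ∂π}

/-- Convex order: `∫ f dμ ≤ ∫ f dν` for all convex `f` integrable w.r.t. both. -/
def ConvexOrder {d : ℕ} (μ ν : Measure (EuclideanSpace ℝ (Fin d))) : Prop :=
  ∀ f : EuclideanSpace ℝ (Fin d) → ℝ, ConvexOn ℝ Set.univ f →
    Integrable f μ → Integrable f ν → ∫ x, f x ∂μ ≤ ∫ x, f x ∂ν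

/-!
Cut `μ` into finitely many blocks `m i`, each nearly concentrated at a point. By Hahn–Banach, the
convex order tested on maxima of finitely many affine functions splits `ν` by a measurable partition
of unity `g i` into shares with the masses of the `m i` and with means as close as desired to
theirs. Coupling each `m i` independently with the share `g i • ν` then costs nearly
`∫ ‖x‖ ^ 2 ∂μ + ∫ ‖y‖ ^ 2 ∂ν - 2 * ∑ i, ‖∫ x ∂m i‖ ^ 2 / m i univ`, and as the blocks have small
variance, the last sum is nearly `∫ ‖x‖ ^ 2 ∂μ`.
-/

open scoped Topology

section FiniteSup

variable {Ω ι : Type*} [Nonempty ι]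

lemma ciSup_apply_eq_sup' [Fintype ι] (φ : ι → Ω → ℝ) :
    (fun y => ⨆ i, φ i y) = Finset.univ.sup' Finset.univ_nonempty φ := by
  ext y
  rw [Finset.sup'_apply, Finset.sup'_univ_eq_ciSup]

variable [Finite ι]

lemma integrable_ciSup [MeasurableSpace Ω] {ν : Measure Ω} {φ : ι → Ω → ℝ}
    (hφ : ∀ i, Integrable (φ i) ν) : Integrable (fun y => ⨆ i, φ i y) ν := by
  cases nonempty_fintype ι
  rw [ciSup_apply_eq_sup']
  exact Finset.sup'_induction _ _ (p := fun ψ : Ω → ℝ => Integrable ψ ν)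
    (fun _ h₁ _ h₂ => h₁.sup h₂) fun i _ => hφ i

lemma continuous_ciSup [TopologicalSpace Ω] {φ : ι → Ω → ℝ} (hφ : ∀ i, Continuous (φ i)) :
    Continuous fun y => ⨆ i, φ i y := by
  cases nonempty_fintype ι
  rw [ciSup_apply_eq_sup']
  exact Continuous.finset_sup' _ fun i _ => hφ i

lemma convexOn_ciSup [AddCommMonoid Ω] [SMul ℝ Ω] {s : Set Ω} {φ : ι → Ω → ℝ}
    (hφ : ∀ i, ConvexOn ℝ s (φ i)) : ConvexOn ℝ s fun y => ⨆ i, φ i y := by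
  cases nonempty_fintype ι
  rw [ciSup_apply_eq_sup']
  exact Finset.sup'_induction _ _ (p := ConvexOn ℝ s) (fun _ h₁ _ h₂ => h₁.sup h₂) fun i _ => hφ i

end FiniteSup

section PartitionOfUnity

variable {Ω ι F : Type*} [MeasurableSpace Ω] [Fintype ι] [NormedAddCommGroup F] [NormedSpace ℝ F]

/-- A finite measurable partition of unity: the value `g i y` is the share of the point `y` that is
assigned to the index `i`. -/
structure IsMeasurablePartitionOfUnity (g : ι → Ω → ℝ) : Prop where
  measurable : ∀ i, Measurable (g i)
  nonneg : ∀ i y, 0 ≤ g i y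
  sum_eq_one : ∀ y, ∑ i, g i y = 1

namespace IsMeasurablePartitionOfUnity

variable {g g' : ι → Ω → ℝ}

lemma norm_le_one (hg : IsMeasurablePartitionOfUnity g) (i : ι) (y : Ω) : ‖g i y‖ ≤ 1 := by
  rw [Real.norm_of_nonneg (hg.nonneg i y), ← hg.sum_eq_one y]
  exact Finset.single_le_sum (f := fun j => g j y) (fun j _ => hg.nonneg j y) (Finset.mem_univ i)

lemma integrable_smul (hg : IsMeasurablePartitionOfUnity g) {ν : Measure Ω} {f : Ω → F}
    (hf : Integrable f ν) (i : ι) : Integrable (fun y => g i y • f y) ν :=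
  hf.bdd_smul 1 (hg.measurable i).aestronglyMeasurable (.of_forall (hg.norm_le_one i))

lemma integrable (hg : IsMeasurablePartitionOfUnity g) (ν : Measure Ω) [IsFiniteMeasure ν] (i : ι) :
    Integrable (g i) ν := by
  simpa using hg.integrable_smul (integrable_const (1 : ℝ)) i

lemma convexComb (hg : IsMeasurablePartitionOfUnity g) (hg' : IsMeasurablePartitionOfUnity g')
    {a b : ℝ} (ha : 0 ≤ a) (hb : 0 ≤ b) (hab : a + b = 1) :
    IsMeasurablePartitionOfUnity fun i y => a * g i y + b * g' i y where
  measurable i := ((hg.measurable i).const_mul a).add ((hg'.measurable i).const_mul b)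
  nonneg i y := add_nonneg (mul_nonneg ha (hg.nonneg i y)) (mul_nonneg hb (hg'.nonneg i y))
  sum_eq_one y := by
    rw [Finset.sum_add_distrib, ← Finset.mul_sum, ← Finset.mul_sum, hg.sum_eq_one, hg'.sum_eq_one,
      mul_one, mul_one, hab]

lemma const {c : ι → ℝ} (hc : c ∈ stdSimplex ℝ ι) :
    IsMeasurablePartitionOfUnity fun i (_ : Ω) => c i where
  measurable _ := measurable_const
  nonneg i _ := hc.1 i
  sum_eq_one _ := hc.2

lemma sum_withDensity (hg : IsMeasurablePartitionOfUnity g) (ν : Measure Ω) :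
    ∑ i, ν.withDensity (fun y => ENNReal.ofReal (g i y)) = ν := by
  have hsum (y : Ω) : ∑ i, ENNReal.ofReal (g i y) = 1 := by
    rw [← ENNReal.ofReal_sum_of_nonneg fun i _ => hg.nonneg i y, hg.sum_eq_one, ENNReal.ofReal_one]
  ext s hs
  simp_rw [Measure.finsetSum_apply, withDensity_apply _ hs]
  rw [← lintegral_finsetSum _ fun i _ => (hg.measurable i).ennreal_ofReal]
  simp_rw [hsum, setLIntegral_one]

lemma withDensity_univ (hg : IsMeasurablePartitionOfUnity g) (ν : Measure Ω) [IsFiniteMeasure ν]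
    (i : ι) :
    ν.withDensity (fun y => ENNReal.ofReal (g i y)) Set.univ = ENNReal.ofReal (∫ y, g i y ∂ν) := by
  rw [withDensity_apply _ MeasurableSet.univ, Measure.restrict_univ,
    ofReal_integral_eq_lintegral_ofReal (hg.integrable ν i) (.of_forall (hg.nonneg i))]

lemma integral_withDensity (hg : IsMeasurablePartitionOfUnity g) (ν : Measure Ω) (f : Ω → F)
    (i : ι) :
    ∫ y, f y ∂ν.withDensity (fun y => ENNReal.ofReal (g i y)) = ∫ y, g i y • f y ∂ν := by
  rw [integral_withDensity_eq_integral_toReal_smul (hg.measurable i).ennreal_ofReal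
    (.of_forall fun _ => ENNReal.ofReal_lt_top)]
  simp_rw [ENNReal.toReal_ofReal (hg.nonneg i _)]

-- Each point is shared equally among the indices at which the maximum is attained.
lemma exists_sum_mul_eq_ciSup [Nonempty ι] {φ : ι → Ω → ℝ} (hφ : ∀ i, Measurable (φ i)) :
    ∃ g : ι → Ω → ℝ, IsMeasurablePartitionOfUnity g ∧ ∀ y, ∑ i, g i y * φ i y = ⨆ i, φ i y := by
  set argmax : ι → Set Ω := fun i => {y | φ i y = ⨆ j, φ j y} with hargmax
  set e : ι → Ω → ℝ := fun i => (argmax i).indicator 1 with he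
  have he_meas (i : ι) : Measurable (e i) :=
    measurable_one.indicator (measurableSet_eq_fun (hφ i) (.iSup hφ))
  have he_nonneg (i : ι) (y : Ω) : 0 ≤ e i y := Set.indicator_nonneg (fun _ _ => zero_le_one) y
  have he_pos (y : Ω) : 0 < ∑ i, e i y := by
    obtain ⟨i, hi⟩ := exists_eq_ciSup_of_finite (f := fun i => φ i y)
    refine Finset.sum_pos' (fun j _ => he_nonneg j y) ⟨i, Finset.mem_univ i, ?_⟩
    simp [he, hargmax, hi]
  have he_mul (i : ι) (y : Ω) : e i y * φ i y = e i y * ⨆ j, φ j y := by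
    by_cases hy : φ i y = ⨆ j, φ j y
    · rw [hy]
    · simp [he, hargmax, hy]
  refine ⟨fun i y => e i y / ∑ j, e j y,
    ⟨fun i => (he_meas i).div (Finset.measurable_fun_sum _ fun j _ => he_meas j),
      fun i y => div_nonneg (he_nonneg i y) (he_pos y).le,
      fun y => by rw [← Finset.sum_div, div_self (he_pos y).ne']⟩, fun y => ?_⟩
  simp_rw [div_mul_eq_mul_div, he_mul]
  rw [← Finset.sum_div, ← Finset.sum_mul, mul_div_cancel_left₀ _ (he_pos y).ne']

end IsMeasurablePartitionOfUnity

end PartitionOfUnity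

section MomentSet

variable {Ω ι F : Type*} [MeasurableSpace Ω] [Fintype ι] [NormedAddCommGroup F] [NormedSpace ℝ F]
  {ν : Measure Ω} {f : Ω → F}

/-- The families of vector integrals `∫ g i • f ∂ν` as `g` runs over the measurable partitions of
unity indexed by `ι`. -/
def momentSet (ι : Type*) [Fintype ι] (ν : Measure Ω) (f : Ω → F) : Set (ι → F) :=
  {w | ∃ g : ι → Ω → ℝ, IsMeasurablePartitionOfUnity g ∧ ∀ i, ∫ y, g i y • f y ∂ν = w i}

lemma convex_momentSet (hf : Integrable f ν) : Convex ℝ (momentSet ι ν f) := by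
  rintro w ⟨g, hg, hw⟩ w' ⟨g', hg', hw'⟩ a b ha hb hab
  refine ⟨_, hg.convexComb hg' ha hb hab, fun i => ?_⟩
  simp_rw [add_smul, mul_smul]
  rw [integral_add (by exact (hg.integrable_smul hf i).smul a)
    (by exact (hg'.integrable_smul hf i).smul b), integral_smul, integral_smul, hw, hw']
  rfl

lemma smul_integral_mem_momentSet {c : ι → ℝ} (hc : c ∈ stdSimplex ℝ ι) (ν : Measure Ω)
    (f : Ω → F) : (fun i => c i • ∫ y, f y ∂ν) ∈ momentSet ι ν f :=
  ⟨_, .const hc, fun _ => integral_smul _ _⟩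

lemma sum_eq_integral_of_mem_momentSet (hf : Integrable f ν) {w : ι → F}
    (hw : w ∈ momentSet ι ν f) : ∑ i, w i = ∫ y, f y ∂ν := by
  obtain ⟨g, hg, hgw⟩ := hw
  simp_rw [← hgw]
  rw [← integral_finsetSum _ fun i _ => hg.integrable_smul hf i]
  simp_rw [← Finset.sum_smul, hg.sum_eq_one, one_smul]

lemma sum_eq_integral_of_mem_closure_momentSet (hf : Integrable f ν) {w : ι → F}
    (hw : w ∈ closure (momentSet ι ν f)) : ∑ i, w i = ∫ y, f y ∂ν :=
  closure_minimal (t := {w : ι → F | ∑ i, w i = ∫ y, f y ∂ν})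
    (fun _ => sum_eq_integral_of_mem_momentSet hf)
    (isClosed_eq (by fun_prop) continuous_const) hw

-- A functional separating `w` from the moment set would be a family `L`, and the supremum of `L`
-- over the moment set is attained by giving each point to a maximising index.
lemma mem_closure_momentSet [CompleteSpace F] [Nonempty ι]
    (hf_meas : ∀ l : F →L[ℝ] ℝ, Measurable fun y => l (f y)) (hf : Integrable f ν) {w : ι → F}
    (hw : ∀ L : ι → F →L[ℝ] ℝ, ∑ i, L i (w i) ≤ ∫ y, ⨆ i, L i (f y) ∂ν) :
    w ∈ closure (momentSet ι ν f) := by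
  classical
  by_contra hw_notMem
  obtain ⟨Λ, u, hΛ, hu⟩ := geometric_hahn_banach_closed_point
    (convex_momentSet hf).closure isClosed_closure hw_notMem
  set L : ι → F →L[ℝ] ℝ := fun i => Λ ∘SL .single ℝ (fun _ => F) i
  have hΛL (v : ι → F) : Λ v = ∑ i, L i (v i) := (Λ.sum_comp_single ℝ _ v).symm
  obtain ⟨g, hg, hgmax⟩ := IsMeasurablePartitionOfUnity.exists_sum_mul_eq_ciSup
    fun i => hf_meas (L i)
  have hLint (i : ι) : Integrable (fun y => g i y * L i (f y)) ν :=
    hg.integrable_smul ((L i).integrable_comp hf) i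
  have hΛg : Λ (fun i => ∫ y, g i y • f y ∂ν) = ∫ y, ⨆ i, L i (f y) ∂ν := by
    simp_rw [hΛL, ← (L _).integral_comp_comm (hg.integrable_smul hf _), map_smul, smul_eq_mul]
    rw [← integral_finsetSum _ fun i _ => hLint i]
    simp_rw [hgmax]
  have hΛg_lt := hΛ _ (subset_closure ⟨g, hg, fun _ => rfl⟩)
  have hΛw_le := hw L
  rw [← hΛL] at hΛw_le
  linarith

lemma exists_partition_of_mem_momentSet_one [CompleteSpace F] [IsFiniteMeasure ν]
    (hf : Integrable f ν) {p : ι → ℝ} {b : ι → F}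
    (h : (fun i => (p i, b i)) ∈ momentSet ι ν fun y => ((1 : ℝ), f y)) :
    ∃ g : ι → Ω → ℝ, IsMeasurablePartitionOfUnity g ∧
      (∀ i, ∫ y, g i y ∂ν = p i) ∧ ∀ i, ∫ y, g i y • f y ∂ν = b i := by
  obtain ⟨g, hg, hgpb⟩ := h
  have hpair (i : ι) : (∫ y, g i y ∂ν, ∫ y, g i y • f y ∂ν) = (p i, b i) := by
    rw [← integral_pair (hg.integrable ν i) (hg.integrable_smul hf i)]
    simpa only [Prod.smul_mk, smul_eq_mul, mul_one] using hgpb i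
  exact ⟨g, hg, fun i => congrArg Prod.fst (hpair i), fun i => congrArg Prod.snd (hpair i)⟩

lemma sum_fst_eq_one_of_mem_closure_momentSet_one [CompleteSpace F] [IsProbabilityMeasure ν]
    (hf : Integrable f ν) {w : ι → ℝ × F}
    (hw : w ∈ closure (momentSet ι ν fun y => ((1 : ℝ), f y))) : ∑ i, (w i).1 = 1 := by
  have hsum := sum_eq_integral_of_mem_closure_momentSet ((integrable_const 1).prodMk hf) hw
  rw [integral_pair (integrable_const 1) hf, integral_const, probReal_univ, one_smul] at hsum
  rw [← Prod.fst_sum, hsum]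

-- Mixing with a share `t` of a constant partition corrects the masses from `(w i).1` to `p i`.
lemma convexComb_mem_momentSet_one [CompleteSpace F] [IsProbabilityMeasure ν]
    (hf : Integrable f ν) {w : ι → ℝ × F}
    (hw : w ∈ momentSet ι ν fun y => ((1 : ℝ), f y)) {p : ι → ℝ} (hp : ∑ i, p i = 1)
    {t : ℝ} (ht : t ∈ Set.Ioo 0 1) (hwp : ∀ i, (1 - t) * (w i).1 ≤ p i) :
    (fun i => (p i, (1 - t) • (w i).2 + (p i - (1 - t) * (w i).1) • ∫ y, f y ∂ν)) ∈
      momentSet ι ν fun y => ((1 : ℝ), f y) := by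
  have hc : (fun i => t⁻¹ * (p i - (1 - t) * (w i).1)) ∈ stdSimplex ℝ ι := by
    refine ⟨fun i => mul_nonneg (inv_nonneg.2 ht.1.le) (sub_nonneg.2 (hwp i)), ?_⟩
    rw [← Finset.mul_sum, Finset.sum_sub_distrib, ← Finset.mul_sum, hp,
      sum_fst_eq_one_of_mem_closure_momentSet_one hf (subset_closure hw), mul_one, sub_sub_cancel,
      inv_mul_cancel₀ ht.1.ne']
  convert convex_momentSet ((integrable_const 1).prodMk hf) hw (smul_integral_mem_momentSet hc ν _)
    (sub_nonneg.2 ht.2.le) ht.1.le (sub_add_cancel 1 t) using 1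
  rw [integral_pair (integrable_const 1) hf]
  ext i <;> simp [smul_smul, mul_inv_cancel_left₀ ht.1.ne']

lemma add_smul_mem_closure_of_mem_closure_momentSet_one [CompleteSpace F] [IsProbabilityMeasure ν]
    (hf : Integrable f ν) {p : ι → ℝ} (hp : ∀ i, 0 < p i) {b : ι → F}
    (h : (fun i => (p i, b i)) ∈ closure (momentSet ι ν fun y => ((1 : ℝ), f y)))
    {t : ℝ} (ht : t ∈ Set.Ioo 0 1) :
    (fun i => (1 - t) • b i + (t * p i) • ∫ y, f y ∂ν) ∈
      closure {w : ι → F | (fun i => (p i, w i)) ∈ momentSet ι ν fun y => ((1 : ℝ), f y)} := by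
  set correct : (ι → ℝ × F) → ι → F :=
    fun w i => (1 - t) • (w i).2 + (p i - (1 - t) * (w i).1) • ∫ y, f y ∂ν
  have hcorrect : Continuous correct := by fun_prop
  have hmass : ∀ᶠ w : ι → ℝ × F in 𝓝 fun i => (p i, b i), ∀ i, (1 - t) * (w i).1 < p i := by
    refine Filter.eventually_all.2 fun i =>
      (Continuous.tendsto (by fun_prop) _).eventually_lt_const ?_
    exact mul_lt_of_lt_one_left (hp i) (sub_lt_self 1 ht.1)
  have hlim : correct (fun i => (p i, b i)) =
      fun i => (1 - t) • b i + (t * p i) • ∫ y, f y ∂ν := by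
    ext i
    simp only [correct]
    ring_nf
  rw [← hlim, mem_closure_iff_frequently]
  refine hcorrect.continuousAt.tendsto.frequently
    (((mem_closure_iff_frequently.1 h).and_eventually hmass).mono fun w hw => ?_)
  exact convexComb_mem_momentSet_one hf hw.1 (sum_fst_eq_one_of_mem_closure_momentSet_one hf h) ht
    fun i => (hw.2 i).le

lemma mem_closure_setOf_mem_momentSet_one [CompleteSpace F] [IsProbabilityMeasure ν]
    (hf : Integrable f ν) {p : ι → ℝ} (hp : ∀ i, 0 < p i) {b : ι → F}
    (h : (fun i => (p i, b i)) ∈ closure (momentSet ι ν fun y => ((1 : ℝ), f y))) :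
    b ∈ closure {w : ι → F | (fun i => (p i, w i)) ∈ momentSet ι ν fun y => ((1 : ℝ), f y)} := by
  have hlim : Filter.Tendsto (fun (t : ℝ) i => (1 - t) • b i + (t * p i) • ∫ y, f y ∂ν)
      (𝓝[>] 0) (𝓝 b) := by
    refine (Continuous.tendsto' (by fun_prop) _ _ ?_).mono_left nhdsWithin_le_nhds
    simp
  refine isClosed_closure.mem_of_tendsto hlim ?_
  filter_upwards [Ioo_mem_nhdsGT one_pos] with t ht
  exact add_smul_mem_closure_of_mem_closure_momentSet_one hf hp h ht

end MomentSet

section Coupling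

variable {X Y ι : Type*} [MeasurableSpace X] [MeasurableSpace Y] [Fintype ι]

/-- Couplings of measures on arbitrary spaces: `IsCoupling π α β` says that `π` has first marginal
`α` and second marginal `β`. -/
def IsCoupling (π : Measure (X × Y)) (α : Measure X) (β : Measure Y) : Prop :=
  π.map Prod.fst = α ∧ π.map Prod.snd = β

lemma IsCoupling.measurePreserving_fst {π : Measure (X × Y)} {α : Measure X} {β : Measure Y}
    (hπ : IsCoupling π α β) : MeasurePreserving Prod.fst π α :=
  ⟨measurable_fst, hπ.1⟩

lemma IsCoupling.measurePreserving_snd {π : Measure (X × Y)} {α : Measure X} {β : Measure Y}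
    (hπ : IsCoupling π α β) : MeasurePreserving Prod.snd π β :=
  ⟨measurable_snd, hπ.2⟩

/-- The coupling of `∑ i, m i` with `ν` that sends the mass of the block `m i` to the share
`g i • ν` of `ν`, independently within each block. It has the right marginals only if `m i` and
`g i • ν` have the same mass for every `i`. -/
def blockCoupling (m : ι → Measure X) (ν : Measure Y) (g : ι → Y → ℝ) : Measure (X × Y) :=
  ∑ i, (m i Set.univ)⁻¹ • (m i).prod (ν.withDensity fun y => ENNReal.ofReal (g i y))

variable {m : ι → Measure X} [∀ i, IsFiniteMeasure (m i)] [∀ i, NeZero (m i)]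
  {ν : Measure Y} [IsFiniteMeasure ν] {g : ι → Y → ℝ}

lemma isCoupling_blockCoupling (hg : IsMeasurablePartitionOfUnity g)
    (hgm : ∀ i, ∫ y, g i y ∂ν = (m i).real Set.univ) :
    IsCoupling (blockCoupling m ν g) (∑ i, m i) ν := by
  have hcancel (i : ι) : (m i Set.univ)⁻¹ * m i Set.univ = 1 :=
    ENNReal.inv_mul_cancel (NeZero.ne _) (measure_ne_top _ _)
  have hshare (i : ι) :
      ν.withDensity (fun y => ENNReal.ofReal (g i y)) Set.univ = m i Set.univ := by
    rw [hg.withDensity_univ, hgm, ofReal_measureReal]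
  constructor
  · rw [blockCoupling, Measure.map_finset_sum measurable_fst.aemeasurable]
    simp_rw [Measure.map_smul, Measure.map_fst_prod, hshare, smul_smul, hcancel, one_smul]
  · rw [blockCoupling, Measure.map_finset_sum measurable_snd.aemeasurable]
    simp_rw [Measure.map_smul, Measure.map_snd_prod, smul_smul, hcancel, one_smul]
    exact hg.sum_withDensity ν

lemma integral_inner_blockCoupling {E : Type*} [NormedAddCommGroup E] [InnerProductSpace ℝ E]
    [CompleteSpace E] (hg : IsMeasurablePartitionOfUnity g) {u : X → E} {v : Y → E}
    (hu : ∀ i, Integrable u (m i)) (hv : Integrable v ν) :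
    ∫ p, inner ℝ (u p.1) (v p.2) ∂blockCoupling m ν g =
      ∑ i, ((m i).real Set.univ)⁻¹ * inner ℝ (∫ x, u x ∂m i) (∫ y, g i y • v y ∂ν) := by
  have hv_share (i : ι) : Integrable v (ν.withDensity fun y => ENNReal.ofReal (g i y)) := by
    rw [← hg.sum_withDensity ν] at hv
    exact integrable_finsetSum_measure.1 hv i (Finset.mem_univ i)
  have hinner (i : ι) : Integrable (fun p : X × Y => inner ℝ (u p.1) (v p.2))
      ((m i Set.univ)⁻¹ • (m i).prod (ν.withDensity fun y => ENNReal.ofReal (g i y))) :=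
    ((hu i).op_fst_snd (op := fun x y : E => inner ℝ x y)
      (by simp only [Function.uncurry_def]; fun_prop)
      ⟨1, fun x y => by rw [one_mul]; exact norm_inner_le_norm x y⟩ (hv_share i)).smul_measure
      (ENNReal.inv_ne_top.2 (NeZero.ne _))
  rw [blockCoupling, integral_finsetSum_measure fun i _ => hinner i]
  refine Finset.sum_congr rfl fun i _ => ?_
  rw [integral_smul_measure, ENNReal.toReal_inv, smul_eq_mul, ← hg.integral_withDensity]
  exact congrArg _ (integral_prod_bilin (innerSL ℝ) (hu i) (hv_share i))

end Coupling

section Decomposition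

variable {Ω E : Type*} [MeasurableSpace Ω]

lemma sum_restrict_fiber (μ : Measure Ω) (S : SimpleFunc Ω E) :
    ∑ s ∈ S.range, μ.restrict (S ⁻¹' {s}) = μ := by
  ext A hA
  have hfiber (s : E) : μ.restrict (S ⁻¹' {s}) A = μ.restrict A (S ⁻¹' {s}) := by
    rw [Measure.restrict_apply hA, Measure.restrict_apply (S.measurableSet_fiber s), Set.inter_comm]
  simp_rw [Measure.finsetSum_apply, hfiber]
  rw [S.sum_range_measure_preimage_singleton, Measure.restrict_apply_univ]

variable [NormedAddCommGroup E] {μ : Measure Ω} {f : Ω → E}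

lemma integral_norm_sq_lt_of_eLpNorm_lt (hf : MemLp f 2 μ) {ε : ℝ}
    (h : eLpNorm f 2 μ < ENNReal.ofReal (√ε)) : ∫ x, ‖f x‖ ^ 2 ∂μ < ε := by
  rw [hf.eLpNorm_eq_integral_rpow_norm two_ne_zero ENNReal.ofNat_ne_top] at h
  simp only [ENNReal.toReal_ofNat, Real.rpow_ofNat, ← one_div, ← Real.sqrt_eq_rpow] at h
  exact (Real.sqrt_lt_sqrt_iff (integral_nonneg fun x => sq_nonneg _)).1
    (ENNReal.ofReal_lt_ofReal_iff'.1 h).1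

lemma exists_sum_eq_of_memLp_two (hf : MemLp f 2 μ) {ε : ℝ} (hε : 0 < ε) :
    ∃ (T : Finset E) (m : T → Measure Ω), (∀ s, NeZero (m s)) ∧ ∑ s, m s = μ ∧
      ∑ s, ∫ x, ‖f x - s‖ ^ 2 ∂m s < ε := by
  classical
  obtain ⟨S, hS, hS_memLp⟩ := hf.exists_simpleFunc_eLpNorm_sub_lt ENNReal.ofNat_ne_top
    (ε := ENNReal.ofReal (√ε)) (by simpa using hε)
  set R : E → Measure Ω := fun s => μ.restrict (S ⁻¹' {s})
  have hR_sum : ∑ s : {s ∈ S.range | R s ≠ 0}, R s = μ := by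
    rw [Finset.sum_coe_sort, Finset.sum_filter_ne_zero, sum_restrict_fiber]
  refine ⟨_, fun s : {s ∈ S.range | R s ≠ 0} => R s, fun s => ⟨(Finset.mem_filter.1 s.2).2⟩,
    hR_sum, ?_⟩
  have hcongr (s : E) : ∫ x, ‖f x - s‖ ^ 2 ∂(R s) = ∫ x, ‖f x - S x‖ ^ 2 ∂(R s) :=
    setIntegral_congr_fun (S.measurableSet_fiber s) fun x hx => by rw [Set.mem_singleton_iff.1 hx]
  have hint : Integrable (fun x => ‖f x - S x‖ ^ 2) μ :=
    (hf.sub hS_memLp).integrable_norm_pow two_ne_zero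
  simp_rw [hcongr]
  rw [← integral_finsetSum_measure fun s _ => hint.restrict, hR_sum]
  exact integral_norm_sq_lt_of_eLpNorm_lt (hf.sub hS_memLp) hS

lemma integral_norm_sq_sub_le [InnerProductSpace ℝ E] [CompleteSpace E] [IsFiniteMeasure μ]
    (hf : MemLp f 2 μ) (c : E) :
    ∫ x, ‖f x‖ ^ 2 ∂μ - (μ.real Set.univ)⁻¹ * ‖∫ x, f x ∂μ‖ ^ 2 ≤ ∫ x, ‖f x - c‖ ^ 2 ∂μ := by
  rcases eq_zero_or_neZero μ with rfl | _
  · simp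
  have hf_int : Integrable f μ := hf.integrable one_le_two
  have hf_sq : Integrable (fun x => ‖f x‖ ^ 2) μ := hf.integrable_norm_pow two_ne_zero
  have hf_inner : Integrable (fun x => 2 * inner ℝ c (f x)) μ :=
    (hf_int.const_inner c).const_mul 2
  have hexpand : ∫ x, ‖f x - c‖ ^ 2 ∂μ =
      ∫ x, ‖f x‖ ^ 2 ∂μ - 2 * inner ℝ c (∫ x, f x ∂μ) + μ.real Set.univ * ‖c‖ ^ 2 := by
    simp_rw [norm_sub_sq_real, real_inner_comm c]
    rw [integral_add (by exact hf_sq.sub hf_inner) (integrable_const _),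
      integral_sub hf_sq hf_inner, integral_const_mul, integral_inner hf_int, integral_const,
      smul_eq_mul]
  have hP : 0 < μ.real Set.univ := measureReal_univ_pos
  have hsq : 0 ≤ ‖∫ x, f x ∂μ - μ.real Set.univ • c‖ ^ 2 := sq_nonneg _
  rw [norm_sub_sq_real, inner_smul_right, norm_smul, Real.norm_of_nonneg hP.le,
    real_inner_comm] at hsq
  rw [hexpand, inv_mul_eq_div, sub_le_comm, le_div_iff₀ hP]
  linarith

lemma integral_norm_sq_sum_sub_le [InnerProductSpace ℝ E] [CompleteSpace E] {ι : Type*} [Fintype ι]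
    {m : ι → Measure Ω} [∀ i, IsFiniteMeasure (m i)] (hf : MemLp f 2 (∑ i, m i)) (c : ι → E) :
    ∫ x, ‖f x‖ ^ 2 ∂∑ i, m i - ∑ i, ((m i).real Set.univ)⁻¹ * ‖∫ x, f x ∂m i‖ ^ 2 ≤
      ∑ i, ∫ x, ‖f x - c i‖ ^ 2 ∂m i := by
  have hf_block (i : ι) : MemLp f 2 (m i) :=
    hf.mono_measure (Measure.sum_fintype m ▸ Measure.le_sum m i)
  rw [integral_finsetSum_measure fun i _ => (hf_block i).integrable_norm_pow two_ne_zero,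
    ← Finset.sum_sub_distrib]
  exact Finset.sum_le_sum fun i _ => integral_norm_sq_sub_le (hf_block i) (c i)

end Decomposition

section HilbertSpace

variable {E : Type*} [NormedAddCommGroup E] [MeasurableSpace E]

/-- The squared 2-Wasserstein distance on a normed space. -/
def wassersteinSq (μ ν : Measure E) : ℝ :=
  sInf {r : ℝ | ∃ π, IsCoupling π μ ν ∧ r = ∫ p, ‖p.1 - p.2‖ ^ 2 ∂π}

lemma wassersteinSq_le {μ ν : Measure E} {π : Measure (E × E)} (hπ : IsCoupling π μ ν) :
    wassersteinSq μ ν ≤ ∫ p, ‖p.1 - p.2‖ ^ 2 ∂π := by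
  refine csInf_le ⟨0, ?_⟩ ⟨π, hπ, rfl⟩
  rintro _ ⟨ρ, -, rfl⟩
  exact integral_nonneg fun p => sq_nonneg _

/-- Convex order tested on continuous convex functions only; in finite dimension all convex
functions are continuous and this is the usual convex order. -/
def ContinuousConvexOrder [NormedSpace ℝ E] (μ ν : Measure E) : Prop :=
  ∀ f : E → ℝ, ConvexOn ℝ Set.univ f → Continuous f →
    Integrable f μ → Integrable f ν → ∫ x, f x ∂μ ≤ ∫ x, f x ∂ν

variable [BorelSpace E] {μ ν : Measure E} {ι : Type*} [Fintype ι] {m : ι → Measure E}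
  [∀ i, IsFiniteMeasure (m i)]

lemma ContinuousConvexOrder.mem_closure_momentSet_one [NormedSpace ℝ E] [CompleteSpace E]
    [Nonempty ι] [IsFiniteMeasure ν] (h : ContinuousConvexOrder (∑ i, m i) ν)
    (hm : ∀ i, Integrable id (m i)) (hν : Integrable id ν) :
    (fun i => ((m i).real Set.univ, ∫ x, x ∂m i)) ∈
      closure (momentSet ι ν fun y => ((1 : ℝ), y)) := by
  refine mem_closure_momentSet
    (fun l => (by fun_prop : Continuous fun y => l ((1 : ℝ), y)).measurable)
    ((integrable_const (1 : ℝ)).prodMk hν) fun L => ?_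
  have hL_cont (i : ι) : Continuous fun y => L i (1, y) := by fun_prop
  have hL_convex (i : ι) : ConvexOn ℝ Set.univ fun y => L i (1, y) := by
    have hsplit (y : E) : L i (1, y) = (L i ∘SL .inr ℝ ℝ E) y + L i (1, 0) := by
      simp [← map_add]
    rw [funext hsplit]
    exact ((L i ∘SL .inr ℝ ℝ E).toLinearMap.convexOn convex_univ).add_const _
  have hone_int (ρ : Measure E) [IsFiniteMeasure ρ] (hρ : Integrable id ρ) :
      Integrable (fun y => ((1 : ℝ), y)) ρ :=
    (integrable_const 1).prodMk hρ
  have hL_int (ρ : Measure E) [IsFiniteMeasure ρ] (hρ : Integrable id ρ) (i : ι) :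
      Integrable (fun y => L i (1, y)) ρ :=
    (L i).integrable_comp (hone_int ρ hρ)
  have hmax_int (i : ι) : Integrable (fun y => ⨆ j, L j (1, y)) (m i) :=
    integrable_ciSup (hL_int (m i) (hm i))
  calc ∑ i, L i ((m i).real Set.univ, ∫ x, x ∂m i)
      = ∑ i, ∫ x, L i (1, x) ∂m i := by
        refine Finset.sum_congr rfl fun i _ => ?_
        rw [(L i).integral_comp_comm (hone_int (m i) (hm i)),
          integral_pair (integrable_const 1) (by exact hm i), integral_const, smul_eq_mul, mul_one]
    _ ≤ ∑ i, ∫ x, ⨆ j, L j (1, x) ∂m i :=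
        Finset.sum_le_sum fun i _ => integral_mono (hL_int (m i) (hm i) i) (hmax_int i)
          fun x => le_ciSup (f := fun j => L j (1, x)) (Set.finite_range _).bddAbove i
    _ = ∫ x, ⨆ j, L j (1, x) ∂∑ i, m i :=
        (integral_finsetSum_measure fun i _ => hmax_int i).symm
    _ ≤ ∫ y, ⨆ j, L j (1, y) ∂ν :=
        h _ (convexOn_ciSup hL_convex) (continuous_ciSup hL_cont)
          (integrable_finsetSum_measure.2 fun i _ => hmax_int i)
          (integrable_ciSup (hL_int ν hν))

variable [InnerProductSpace ℝ E]

lemma IsCoupling.integral_norm_sub_sq {π : Measure (E × E)}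
    (hπ : IsCoupling π μ ν) (hμ : MemLp id 2 μ) (hν : MemLp id 2 ν) :
    ∫ p, ‖p.1 - p.2‖ ^ 2 ∂π =
      ∫ x, ‖x‖ ^ 2 ∂μ + ∫ y, ‖y‖ ^ 2 ∂ν - 2 * ∫ p, inner ℝ p.1 p.2 ∂π := by
  have hfst : MemLp Prod.fst 2 π := hμ.comp_measurePreserving hπ.measurePreserving_fst
  have hsnd : MemLp Prod.snd 2 π := hν.comp_measurePreserving hπ.measurePreserving_snd
  have hinner : Integrable (fun p : E × E => inner ℝ p.1 p.2) π := by
    refine (hfst.norm.integrable_mul hsnd.norm).mono (hfst.1.inner hsnd.1) (.of_forall fun p => ?_)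
    simpa using abs_real_inner_le_norm p.1 p.2
  have hfst_sq : Integrable (fun p : E × E => ‖p.1‖ ^ 2) π := hfst.integrable_norm_pow two_ne_zero
  have hsnd_sq : Integrable (fun p : E × E => ‖p.2‖ ^ 2) π := hsnd.integrable_norm_pow two_ne_zero
  simp_rw [norm_sub_sq_real]
  rw [integral_add (by exact hfst_sq.sub (hinner.const_mul 2)) hsnd_sq,
    integral_sub hfst_sq (hinner.const_mul 2), integral_const_mul,
    ← hπ.measurePreserving_fst.map_eq, ← hπ.measurePreserving_snd.map_eq,
    integral_map (by fun_prop) (by fun_prop), integral_map (by fun_prop) (by fun_prop)]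
  ring

variable [CompleteSpace E] [IsProbabilityMeasure ν] [∀ i, NeZero (m i)]

lemma wassersteinSq_sum_le_of_mem_momentSet_one (hm : MemLp id 2 (∑ i, m i)) (hν : MemLp id 2 ν)
    {w : ι → E}
    (hw : (fun i => ((m i).real Set.univ, w i)) ∈ momentSet ι ν fun y => ((1 : ℝ), y)) :
    wassersteinSq (∑ i, m i) ν ≤ ∫ x, ‖x‖ ^ 2 ∂∑ i, m i + ∫ y, ‖y‖ ^ 2 ∂ν -
      2 * ∑ i, ((m i).real Set.univ)⁻¹ * inner ℝ (∫ x, x ∂m i) (w i) := by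
  have hm_int (i : ι) : Integrable id (m i) :=
    integrable_finsetSum_measure.1 (hm.integrable one_le_two) i (Finset.mem_univ i)
  have hν_int : Integrable id ν := hν.integrable one_le_two
  obtain ⟨g, hg, hg_mass, hg_mean⟩ := exists_partition_of_mem_momentSet_one hν_int hw
  have hπ := isCoupling_blockCoupling hg hg_mass
  refine (wassersteinSq_le hπ).trans_eq ?_
  have hinner := integral_inner_blockCoupling hg hm_int hν_int
  simp only [id] at hinner hg_mean
  rw [hπ.integral_norm_sub_sq hm hν, hinner]
  simp_rw [hg_mean]

lemma wassersteinSq_sum_le [IsProbabilityMeasure (∑ i, m i)] (hm : MemLp id 2 (∑ i, m i))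
    (hν : MemLp id 2 ν) (h : ContinuousConvexOrder (∑ i, m i) ν) :
    wassersteinSq (∑ i, m i) ν ≤ ∫ x, ‖x‖ ^ 2 ∂∑ i, m i + ∫ y, ‖y‖ ^ 2 ∂ν -
      2 * ∑ i, ((m i).real Set.univ)⁻¹ * ‖∫ x, x ∂m i‖ ^ 2 := by
  have : Nonempty ι := by
    by_contra! hι
    exact IsProbabilityMeasure.ne_zero (∑ i, m i) (Finset.sum_of_isEmpty _)
  have hm_int (i : ι) : Integrable id (m i) :=
    integrable_finsetSum_measure.1 (hm.integrable one_le_two) i (Finset.mem_univ i)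
  have hν_int : Integrable id ν := hν.integrable one_le_two
  have hmem := mem_closure_setOf_mem_momentSet_one hν_int (fun i => measureReal_univ_pos)
    (h.mem_closure_momentSet_one hm_int hν_int)
  simp_rw [← real_inner_self_eq_norm_sq (∫ x, x ∂m _)]
  exact closure_minimal (t := {w : ι → E | wassersteinSq (∑ i, m i) ν ≤
      ∫ x, ‖x‖ ^ 2 ∂∑ i, m i + ∫ y, ‖y‖ ^ 2 ∂ν -
        2 * ∑ i, ((m i).real Set.univ)⁻¹ * inner ℝ (∫ x, x ∂m i) (w i)})
    (fun w => wassersteinSq_sum_le_of_mem_momentSet_one hm hν)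
    (isClosed_le (by fun_prop) (by fun_prop)) hmem

end HilbertSpace

theorem stmt6_general {E : Type*} [NormedAddCommGroup E] [InnerProductSpace ℝ E] [CompleteSpace E]
    [MeasurableSpace E] [BorelSpace E] {μ ν : Measure E} [IsProbabilityMeasure μ]
    [IsProbabilityMeasure ν] (hμ : MemLp id 2 μ) (hν : MemLp id 2 ν)
    (h : ContinuousConvexOrder μ ν) :
    wassersteinSq μ ν ≤ ∫ y, ‖y‖ ^ 2 ∂ν - ∫ x, ‖x‖ ^ 2 ∂μ := by
  refine le_of_forall_pos_le_add fun ε hε => ?_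
  obtain ⟨T, m, hm_ne, rfl, hm_close⟩ := exists_sum_eq_of_memLp_two hμ (half_pos hε)
  have hm_fin (s : T) : IsFiniteMeasure (m s) :=
    isFiniteMeasure_of_le _ (Measure.sum_fintype m ▸ Measure.le_sum m s)
  have hvar := integral_norm_sq_sum_sub_le hμ fun s : T => (s : E)
  have hW := wassersteinSq_sum_le hμ hν h
  simp only [id] at hm_close hvar
  linarith

theorem stmt6 (d : ℕ) (hd : 1 ≤ d)
    (μ ν : Measure (EuclideanSpace ℝ (Fin d)))
    [IsProbabilityMeasure μ] [IsProbabilityMeasure ν]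
    (hμ : Integrable (fun x => ‖x‖ ^ 2) μ) (hν : Integrable (fun y => ‖y‖ ^ 2) ν)
    (h : ConvexOrder μ ν) :
    W2sq μ ν ≤ ∫ y, ‖y‖ ^ 2 ∂ν - ∫ x, ‖x‖ ^ 2 ∂μ :=
  stmt6_general ((memLp_two_iff_integrable_sq_norm aestronglyMeasurable_id).2 hμ)
    ((memLp_two_iff_integrable_sq_norm aestronglyMeasurable_id).2 hν) fun f hf _ => h f hf
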